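/- arXiv:1504.00174 — 2 statements merged into one kernel-verified Lean document; each statement's English description precedes it below -/
import Mathlib

section
/- Let R be a commutative ring with unit containing the field of rational numbers, V an R-module, ∇' : V ⊗_R V → Sym_R(V) an R-bilinear map, and ∇ its unique extension to Sym_R(V) ⊗_R Sym_R(V) → Sym_R(V) satisfying the Leibniz rule in each argument. If ∇' is skew-symmetric and satisfies the Jacobi identity {x,{y,z}} + {y,{z,x}} + {z,{x,y}} = 0 for all x,y,z ∈ V (the outer bracket being the Leibniz extension), then ∇ satisfies the Jacobi identity on all of Sym_R(V); consequently (Sym_R(V), ∇) is a Poisson algebra. -/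
/-!
On `Sym_R(V)` a property holds everywhere once it holds on scalars and on `V` and is stable under
sums and products (`symmAlg_induction`). Skew-symmetry of `∇` passes from `V` to `Sym_R(V)` this
way, because `∇` is a derivation in each argument and hence kills scalars. Once `∇` is skew, the
Jacobiator `J(a,b,c) = {a,{b,c}} + {b,{c,a}} + {c,{a,b}}` is itself a derivation in `c`: expanding
`J(a,b,cd)`, the cross terms `{b,c}{a,d}` and `{a,c}{b,d}` cancel against `{b,c}{d,a}` and
`{c,a}{b,d}`. As `J` is cyclically invariant, its vanishing on `V` spreads to all of `Sym_R(V)` one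
argument at a time.
-/

noncomputable section

open MvPolynomial in
/-- The ideal of linearity relations presenting the symmetric algebra of the module `V`
as a quotient of the polynomial algebra on the set `V`. -/
def symIdeal (R V : Type) [CommRing R] [AddCommGroup V] [Module R V] :
    Ideal (MvPolynomial V R) :=
  Ideal.span
    ({p | ∃ v w : V, p = X (v + w) - X v - X w} ∪
     {p | ∃ (r : R) (v : V), p = X (r • v) - C r * X v})

/-- The symmetric algebra `Sym_R(V)` of an `R`-module `V`. -/
abbrev SymmAlg (R V : Type) [CommRing R] [AddCommGroup V] [Module R V] : Type :=
  MvPolynomial V R ⧸ symIdeal R V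

open MvPolynomial in
/-- The canonical linear inclusion `V → Sym_R(V)`. -/
def symι (R V : Type) [CommRing R] [AddCommGroup V] [Module R V] :
    V →ₗ[R] SymmAlg R V where
  toFun v := Ideal.Quotient.mk (symIdeal R V) (X v)
  map_add' v w := by
    rw [← map_add, Ideal.Quotient.eq]
    exact Ideal.subset_span (Or.inl ⟨v, w, by ring⟩)
  map_smul' r v := by
    simp only [RingHom.id_apply]
    rw [show r • (Ideal.Quotient.mk (symIdeal R V)) (X v)
          = Ideal.Quotient.mk (symIdeal R V) (r • X v) from
        (map_smul (Ideal.Quotient.mkₐ R (symIdeal R V)) r (X v)).symm]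
    rw [show r • (X v : MvPolynomial V R) = C r * X v from by rw [smul_eq_C_mul]]
    rw [Ideal.Quotient.eq]
    exact Ideal.subset_span (Or.inr ⟨r, v, by ring⟩)

/-- `Sym_R(V)` is generated as an `R`-algebra by the image of `V`. -/
theorem symmAlg_induction {R V : Type} [CommRing R] [AddCommGroup V] [Module R V]
    {P : SymmAlg R V → Prop}
    (hC : ∀ r : R, P (algebraMap R (SymmAlg R V) r))
    (hι : ∀ v : V, P (symι R V v))
    (hadd : ∀ a b, P a → P b → P (a + b))
    (hmul : ∀ a b, P a → P b → P (a * b)) (a : SymmAlg R V) : P a := by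
  obtain ⟨p, rfl⟩ := Ideal.Quotient.mk_surjective a
  induction p using MvPolynomial.induction_on with
  | C r => exact hC r
  | add p q hp hq => rw [map_add]; exact hadd _ _ hp hq
  | mul_X p v hp => rw [map_mul]; exact hmul _ _ hp (hι v)

section Bracket

variable {R A : Type} [CommRing R] [CommRing A] [Algebra R A]

theorem leibniz_algebraMap (d : A →ₗ[R] A) (hd : ∀ a b, d (a * b) = d a * b + a * d b) (r : R) :
    d (algebraMap R A r) = 0 := by
  have h1 : d 1 = 0 := by simpa using hd 1 1
  rw [Algebra.algebraMap_eq_smul_one, map_smul, h1, smul_zero]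

/-- The Jacobiator of a bilinear bracket. -/
def jacobiator (D : A →ₗ[R] A →ₗ[R] A) (a b c : A) : A :=
  D a (D b c) + D b (D c a) + D c (D a b)

theorem jacobiator_rotate (D : A →ₗ[R] A →ₗ[R] A) (a b c : A) :
    jacobiator D a b c = jacobiator D b c a := by
  unfold jacobiator; ring

theorem jacobiator_add (D : A →ₗ[R] A →ₗ[R] A) (a b c d : A) :
    jacobiator D a b (c + d) = jacobiator D a b c + jacobiator D a b d := by
  simp only [jacobiator, map_add, LinearMap.add_apply]; ring

/-- The Jacobiator of a skew-symmetric biderivation is a derivation in its last argument. -/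
theorem jacobiator_mul (D : A →ₗ[R] A →ₗ[R] A)
    (hr : ∀ a b c, D a (b * c) = D a b * c + b * D a c)
    (hl : ∀ a b c, D (a * b) c = D a c * b + a * D b c)
    (hs : ∀ a b, D a b = - D b a) (a b c d : A) :
    jacobiator D a b (c * d) = jacobiator D a b c * d + c * jacobiator D a b d := by
  simp only [jacobiator, hr, hl, map_add]
  rw [hs c a, hs d a]
  ring

theorem jacobiator_algebraMap (D : A →ₗ[R] A →ₗ[R] A)
    (hr : ∀ a b c, D a (b * c) = D a b * c + b * D a c)
    (hl : ∀ a b c, D (a * b) c = D a c * b + a * D b c) (a b : A) (r : R) :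
    jacobiator D a b (algebraMap R A r) = 0 := by
  have hR : ∀ x, D x (algebraMap R A r) = 0 := fun x => leibniz_algebraMap (D x) (hr x) r
  have hL : ∀ x, D (algebraMap R A r) x = 0 := fun x =>
    leibniz_algebraMap (D.flip x) (fun a b => hl a b x) r
  simp [jacobiator, hR, hL]

end Bracket

/-- **Lemma 3.1(2).** If a bilinear bracket on `Sym_R(V)` extends a bilinear map
`∇' : V ⊗ V → Sym_R(V)` and satisfies the Leibniz rule in each argument, and if `∇'`
is skew-symmetric and satisfies the Jacobi identity on `V` (the outer bracket being the
Leibniz extension), then the extension satisfies the Jacobi identity on all of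
`Sym_R(V)`; consequently `(Sym_R(V), ∇)` is a Poisson algebra. -/
theorem statement1 {R : Type} [CommRing R] [Algebra ℚ R]
    {V : Type} [AddCommGroup V] [Module R V]
    (nabla' : V →ₗ[R] V →ₗ[R] SymmAlg R V)
    (D : SymmAlg R V →ₗ[R] SymmAlg R V →ₗ[R] SymmAlg R V)
    (hext : ∀ x y : V, D (symι R V x) (symι R V y) = nabla' x y)
    (hleib_right : ∀ a b c : SymmAlg R V, D a (b * c) = D a b * c + b * D a c)
    (hleib_left : ∀ a b c : SymmAlg R V, D (a * b) c = D a c * b + a * D b c)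
    (hskew' : ∀ x y : V, nabla' x y = - nabla' y x)
    (hjacobi' : ∀ x y z : V,
      D (symι R V x) (nabla' y z) + D (symι R V y) (nabla' z x)
        + D (symι R V z) (nabla' x y) = 0) :
    (∀ a b c : SymmAlg R V, D a (D b c) + D b (D c a) + D c (D a b) = 0) ∧
    -- consequently `(Sym_R(V), D)` is a Poisson algebra:
    (∀ a b : SymmAlg R V, D a b = - D b a) ∧
    (∀ a b c : SymmAlg R V, D a (b * c) = D a b * c + b * D a c) := by
  have hskew : ∀ a b : SymmAlg R V, D a b = - D b a := by
    have hR : ∀ a r, D a (algebraMap R (SymmAlg R V) r) = 0 := fun a r =>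
      leibniz_algebraMap (D a) (hleib_right a) r
    have hL : ∀ a r, D (algebraMap R (SymmAlg R V) r) a = 0 := fun a r =>
      leibniz_algebraMap (D.flip a) (fun x y => hleib_left x y a) r
    intro a b
    induction a using symmAlg_induction with
    | hC r => rw [hR, hL, neg_zero]
    | hadd a a' h h' => rw [map_add, LinearMap.add_apply, map_add, h, h']; ring
    | hmul a a' h h' => rw [hleib_left, hleib_right, h, h']; ring
    | hι x =>
      induction b using symmAlg_induction with
      | hC r => rw [hR, hL, neg_zero]
      | hadd b b' h h' => rw [map_add, map_add, LinearMap.add_apply, h, h']; ring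
      | hmul b b' h h' => rw [hleib_left, hleib_right, h, h']; ring
      | hι y => rw [hext, hext, hskew']
  refine ⟨?_, hskew, hleib_right⟩
  -- Vanishing on `V` in the last argument gives vanishing for every last argument.
  have key : ∀ a b : SymmAlg R V, (∀ z : V, jacobiator D a b (symι R V z) = 0) →
      ∀ c, jacobiator D a b c = 0 := by
    intro a b hV c
    induction c using symmAlg_induction with
    | hC r => exact jacobiator_algebraMap D hleib_right hleib_left a b r
    | hι z => exact hV z
    | hadd c d hc hd => rw [jacobiator_add, hc, hd, add_zero]
    | hmul c d hc hd =>
      rw [jacobiator_mul D hleib_right hleib_left hskew, hc, hd, zero_mul, mul_zero, add_zero]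
  intro a b c
  change jacobiator D a b c = 0
  refine key a b (fun z => ?_) c
  rw [← jacobiator_rotate]
  refine key _ a (fun y => ?_) b
  rw [← jacobiator_rotate]
  refine key _ _ (fun x => ?_) a
  simpa only [jacobiator, hext] using hjacobi' y z x

end
end

section
/- Let R be a commutative ring with unit containing the field of rational numbers, V an R-module, S = Sym_R(V) with its standard bialgebra structure (Δ(x) = x⊗1 + 1⊗x for x ∈ V), δ' : V → S ⊗_R S an R-linear map, and δ : S → S ⊗_R S its extension determined by the (m,δ)-compatibility δ(ab) = δ(a)·Δ(b) + Δ(a)·δ(b) and δ(1) = 0. If δ' is co-skew symmetric and satisfies the co-Leibniz rule and the co-Jacobi identity (τ² + τ + id^{⊗3})∘(id⊗δ)∘δ' = 0 on V, then δ satisfies the co-Jacobi identity (τ² + τ + id^{⊗3})∘(id⊗δ)∘δ = 0 on all of S; consequently (S, δ) is a co-Poisson coalgebra. -/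
/-!
Let `X a = (id ⊗ δ)(Δ a)`, `Δ² a = (id ⊗ Δ)(Δ a)` and `N = τ² + τ + id`. Since `Δ` is
cocommutative and coassociative (two algebra maps agreeing on generators), each of the three
identities is propagated from factors to products, so it suffices to know it on `V`.

Co-skew symmetry and the co-Leibniz rule are immediate from compatibility, because all
permutation operators and `id ⊗ Δ`, `Δ ⊗ id` are algebra maps and `id ⊗ δ`, `δ ⊗ id` are
derivations along them. For co-Jacobi, compatibility gives
`(id ⊗ δ)δ(ab) = (id ⊗ δ)δ(a) · Δ² b + Δ² a · (id ⊗ δ)δ(b) + cross terms`, with cross terms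
`(id ⊗ Δ)δ(a) · X b + X a · (id ⊗ Δ)δ(b)`. Co-Leibniz together with co-skew symmetry rewrites
`(id ⊗ Δ)δ(a) = τ (X a) - τ² (X a)`; as `τ` is an algebra automorphism of order three, `N` kills
the cross terms, while `τ` fixes `Δ² a` and `Δ² b`, so `N` of the other terms vanishes as well.
-/


set_option synthInstance.maxHeartbeats 1000000
set_option maxHeartbeats 1000000

noncomputable section

open scoped TensorProduct

section TensorOps
variable (R S : Type) [CommRing R] [AddCommGroup S] [Module R S]

/-- The operator exchanging the first two factors of a threefold tensor product. -/
def sigma12 : S ⊗[R] (S ⊗[R] S) →ₗ[R] S ⊗[R] (S ⊗[R] S) :=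
  (TensorProduct.assoc R S S S).toLinearMap ∘ₗ
    (LinearMap.rTensor S (TensorProduct.comm R S S).toLinearMap) ∘ₗ
      (TensorProduct.assoc R S S S).symm.toLinearMap

/-- The operator exchanging the last two factors of a threefold tensor product. -/
def sigma23 : S ⊗[R] (S ⊗[R] S) →ₗ[R] S ⊗[R] (S ⊗[R] S) :=
  LinearMap.lTensor S (TensorProduct.comm R S S).toLinearMap

/-- The cyclic permutation `τ = σ₂₃ ∘ σ₁₂` of a threefold tensor product. -/
def tau3 : S ⊗[R] (S ⊗[R] S) →ₗ[R] S ⊗[R] (S ⊗[R] S) :=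
  sigma23 R S ∘ₗ sigma12 R S

variable {R S}

/-- `f ⊗ id : S ⊗ S → (S ⊗ S) ⊗ S ≃ S ⊗ (S ⊗ S)` for `f : S → S ⊗ S`. -/
def lmapTensorId (f : S →ₗ[R] S ⊗[R] S) : S ⊗[R] S →ₗ[R] S ⊗[R] (S ⊗[R] S) :=
  (TensorProduct.assoc R S S S).toLinearMap ∘ₗ LinearMap.rTensor S f

/-- `id ⊗ f : S ⊗ S → S ⊗ (S ⊗ S)` for `f : S → S ⊗ S`. -/
def idTensorLmap (f : S →ₗ[R] S ⊗[R] S) : S ⊗[R] S →ₗ[R] S ⊗[R] (S ⊗[R] S) :=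
  LinearMap.lTensor S f

end TensorOps

section Generic

variable {R S : Type} [CommRing R] [CommRing S] [Algebra R S]

lemma sigma12_tmul (a b c : S) :
    sigma12 R S (a ⊗ₜ[R] (b ⊗ₜ[R] c)) = b ⊗ₜ[R] (a ⊗ₜ[R] c) := by
  simp [sigma12]

lemma sigma23_tmul (a b c : S) :
    sigma23 R S (a ⊗ₜ[R] (b ⊗ₜ[R] c)) = a ⊗ₜ[R] (c ⊗ₜ[R] b) := by
  simp [sigma23]

lemma sigma12_mul (x y : S ⊗[R] (S ⊗[R] S)) :
    sigma12 R S (x * y) = sigma12 R S x * sigma12 R S y := by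
  have h : sigma12 R S = (Algebra.TensorProduct.leftComm R S S S).toLinearMap := by
    ext a b c
    simp [sigma12]
  rw [h]
  exact map_mul (Algebra.TensorProduct.leftComm R S S S) x y

lemma sigma23_mul (x y : S ⊗[R] (S ⊗[R] S)) :
    sigma23 R S (x * y) = sigma23 R S x * sigma23 R S y := by
  have h : sigma23 R S = (Algebra.TensorProduct.map (AlgHom.id R S)
      (Algebra.TensorProduct.comm R S S).toAlgHom).toLinearMap := by
    ext a b c
    simp [sigma23]
  rw [h]
  exact map_mul (Algebra.TensorProduct.map (AlgHom.id R S)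
      (Algebra.TensorProduct.comm R S S).toAlgHom) x y

lemma tau3_mul (x y : S ⊗[R] (S ⊗[R] S)) :
    tau3 R S (x * y) = tau3 R S x * tau3 R S y := by
  simp [tau3, sigma12_mul, sigma23_mul]

lemma tau3_tau3 (x : S ⊗[R] (S ⊗[R] S)) :
    tau3 R S (tau3 R S x) = sigma12 R S (sigma23 R S x) := by
  have h : tau3 R S ∘ₗ tau3 R S = sigma12 R S ∘ₗ sigma23 R S := by
    ext a b c
    simp [tau3, sigma12_tmul, sigma23_tmul]
  exact LinearMap.congr_fun h x

lemma tau3_cube (x : S ⊗[R] (S ⊗[R] S)) : tau3 R S (tau3 R S (tau3 R S x)) = x := by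
  have h : tau3 R S ∘ₗ tau3 R S ∘ₗ tau3 R S = LinearMap.id := by
    ext a b c
    simp [tau3, sigma12_tmul, sigma23_tmul]
  exact LinearMap.congr_fun h x

lemma comm_mul (x y : S ⊗[R] S) :
    TensorProduct.comm R S S (x * y) = TensorProduct.comm R S S x * TensorProduct.comm R S S y :=
  map_mul (Algebra.TensorProduct.comm R S S) x y

variable (D : S →ₐ[R] S ⊗[R] S) (d : S →ₗ[R] S ⊗[R] S)

lemma idTensorLmap_algHom_mul (x y : S ⊗[R] S) :
    idTensorLmap D.toLinearMap (x * y)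
      = idTensorLmap D.toLinearMap x * idTensorLmap D.toLinearMap y :=
  map_mul (Algebra.TensorProduct.map (AlgHom.id R S) D) x y

lemma lmapTensorId_algHom_mul (x y : S ⊗[R] S) :
    lmapTensorId D.toLinearMap (x * y)
      = lmapTensorId D.toLinearMap x * lmapTensorId D.toLinearMap y :=
  map_mul ((Algebra.TensorProduct.assoc R R R S S S).toAlgHom.comp
    (Algebra.TensorProduct.map D (AlgHom.id R S))) x y

variable {D d}

/-- If `d` is a derivation along `D`, then `id ⊗ d` is a derivation along `id ⊗ D`. -/
lemma idTensorLmap_mul (hc : ∀ a b : S, d (a * b) = d a * D b + D a * d b) (x y : S ⊗[R] S) :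
    idTensorLmap d (x * y) = idTensorLmap d x * idTensorLmap D.toLinearMap y
      + idTensorLmap D.toLinearMap x * idTensorLmap d y := by
  induction x with
  | zero => simp
  | add x₁ x₂ h₁ h₂ => simp only [add_mul, map_add, h₁, h₂]; abel
  | tmul a b =>
    induction y with
    | zero => simp
    | add y₁ y₂ h₁ h₂ => simp only [mul_add, map_add, h₁, h₂]; abel
    | tmul a' b' => simp [idTensorLmap, hc, TensorProduct.tmul_add]

/-- If `d` is a derivation along `D`, then `d ⊗ id` is a derivation along `D ⊗ id`. -/
lemma lmapTensorId_mul (hc : ∀ a b : S, d (a * b) = d a * D b + D a * d b) (x y : S ⊗[R] S) :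
    lmapTensorId d (x * y) = lmapTensorId d x * lmapTensorId D.toLinearMap y
      + lmapTensorId D.toLinearMap x * lmapTensorId d y := by
  have ha (u v : (S ⊗[R] S) ⊗[R] S) : TensorProduct.assoc R S S S (u * v)
      = TensorProduct.assoc R S S S u * TensorProduct.assoc R S S S v :=
    map_mul (Algebra.TensorProduct.assoc R R R S S S) u v
  induction x with
  | zero => simp
  | add x₁ x₂ h₁ h₂ => simp only [add_mul, map_add, h₁, h₂]; abel
  | tmul a b =>
    induction y with
    | zero => simp
    | add y₁ y₂ h₁ h₂ => simp only [mul_add, map_add, h₁, h₂]; abel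
    | tmul a' b' => simp [lmapTensorId, hc, TensorProduct.add_tmul, ← ha]

lemma tau3_idTensorLmap (f : S →ₗ[R] S ⊗[R] S) (x : S ⊗[R] S) :
    tau3 R S (idTensorLmap f x) = lmapTensorId f (TensorProduct.comm R S S x) := by
  induction x with
  | zero => simp
  | add x y hx hy => simp only [map_add, hx, hy]
  | tmul a b =>
    simp only [idTensorLmap, lmapTensorId, LinearMap.lTensor_tmul, TensorProduct.comm_tmul,
      LinearMap.comp_apply, LinearMap.rTensor_tmul]
    generalize f b = z
    induction z with
    | zero => simp
    | add x y hx hy => simp only [TensorProduct.tmul_add, TensorProduct.add_tmul, map_add, hx, hy]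
    | tmul u v => simp [tau3, sigma12_tmul, sigma23_tmul]

lemma sigma23_idTensorLmap (f : S →ₗ[R] S ⊗[R] S) (x : S ⊗[R] S) :
    sigma23 R S (idTensorLmap f x)
      = idTensorLmap ((TensorProduct.comm R S S).toLinearMap ∘ₗ f) x := by
  simp [sigma23, idTensorLmap, LinearMap.lTensor_comp]

/-- The three identities for a derivation `d` along a comultiplication `D` on a commutative
algebra `S` generated by elements which are primitive for `D`, and on which the identities hold. -/
theorem coPoisson_of_generators {V : Type} (ι : V → S)
    (hgen : Algebra.adjoin R (Set.range ι) = ⊤)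
    (hD : ∀ x, D (ι x) = ι x ⊗ₜ[R] 1 + 1 ⊗ₜ[R] ι x)
    (hone : d 1 = 0) (hc : ∀ a b : S, d (a * b) = d a * D b + D a * d b)
    (hskew : ∀ x, TensorProduct.comm R S S (d (ι x)) = - d (ι x))
    (hleib : ∀ x, idTensorLmap D.toLinearMap (d (ι x))
      = lmapTensorId d (D (ι x)) + sigma12 R S (idTensorLmap d (D (ι x))))
    (hjac : ∀ x, tau3 R S (tau3 R S (idTensorLmap d (d (ι x))))
      + tau3 R S (idTensorLmap d (d (ι x))) + idTensorLmap d (d (ι x)) = 0) :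
    (∀ a, tau3 R S (tau3 R S (idTensorLmap d (d a)))
      + tau3 R S (idTensorLmap d (d a)) + idTensorLmap d (d a) = 0) ∧
    (∀ a, TensorProduct.comm R S S (d a) = - d a) ∧
    (∀ a, idTensorLmap D.toLinearMap (d a)
      = lmapTensorId d (D a) + sigma12 R S (idTensorLmap d (D a))) := by
  have ind (P : S → Prop) (h0 : ∀ r : R, P (algebraMap R S r)) (hι : ∀ x, P (ι x))
      (hadd : ∀ a b, P a → P b → P (a + b)) (hmul : ∀ a b, P a → P b → P (a * b)) (a : S) :
      P a := by
    have ha : a ∈ Algebra.adjoin R (Set.range ι) := hgen ▸ Algebra.mem_top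
    induction ha using Algebra.adjoin_induction with
    | mem x hx => obtain ⟨v, rfl⟩ := hx; exact hι v
    | algebraMap r => exact h0 r
    | add x y _ _ hx hy => exact hadd x y hx hy
    | mul x y _ _ hx hy => exact hmul x y hx hy
  have d_alg (r : R) : d (algebraMap R S r) = 0 := by
    rw [Algebra.algebraMap_eq_smul_one, map_smul, hone, smul_zero]
  have D_alg (r : R) : D (algebraMap R S r) = r • ((1 : S) ⊗ₜ[R] (1 : S)) := by
    rw [Algebra.algebraMap_eq_smul_one, map_smul, map_one]; rfl
  have hD1 : D 1 = (1 : S) ⊗ₜ[R] (1 : S) := by rw [map_one]; rfl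
  have hcocomm : ∀ a, TensorProduct.comm R S S (D a) = D a := by
    refine ind _ ?_ ?_ ?_ ?_
    · intro r; simp [D_alg]
    · intro x; simp [hD, add_comm]
    · intro a b ha hb; simp only [map_add, ha, hb]
    · intro a b ha hb; rw [map_mul, comm_mul, ha, hb]
  have hcoassoc : ∀ a, lmapTensorId D.toLinearMap (D a) = idTensorLmap D.toLinearMap (D a) := by
    refine ind _ ?_ ?_ ?_ ?_
    · intro r; simp [D_alg, lmapTensorId, idTensorLmap, hD1, -map_one]
    · intro x
      simp [hD, lmapTensorId, idTensorLmap, hD1, -map_one, TensorProduct.tmul_add,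
        TensorProduct.add_tmul, add_assoc]
    · intro a b ha hb; simp only [map_add, ha, hb]
    · intro a b ha hb
      rw [map_mul, lmapTensorId_algHom_mul, idTensorLmap_algHom_mul, ha, hb]
  -- The iterated comultiplication is invariant under all permutations of its three factors.
  have htau : ∀ a, tau3 R S (idTensorLmap D.toLinearMap (D a))
      = idTensorLmap D.toLinearMap (D a) := by
    intro a
    rw [tau3_idTensorLmap, hcocomm, hcoassoc]
  have hs23 : ∀ a, sigma23 R S (idTensorLmap D.toLinearMap (D a))
      = idTensorLmap D.toLinearMap (D a) := by
    intro a
    have h : (TensorProduct.comm R S S).toLinearMap ∘ₗ D.toLinearMap = D.toLinearMap := by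
      ext b
      exact hcocomm b
    rw [sigma23_idTensorLmap, h]
  have hs12 : ∀ a, sigma12 R S (idTensorLmap D.toLinearMap (D a))
      = idTensorLmap D.toLinearMap (D a) := by
    intro a
    have h := tau3_tau3 (idTensorLmap D.toLinearMap (D a))
    rw [hs23, htau, htau] at h
    exact h.symm
  have skew : ∀ a, TensorProduct.comm R S S (d a) = - d a := by
    refine ind _ ?_ hskew ?_ ?_
    · intro r; simp [d_alg]
    · intro a b ha hb; simp only [map_add, ha, hb]; abel
    · intro a b ha hb
      rw [hc, map_add, comm_mul, comm_mul, ha, hb, hcocomm, hcocomm]; ring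
  have leib : ∀ a, idTensorLmap D.toLinearMap (d a)
      = lmapTensorId d (D a) + sigma12 R S (idTensorLmap d (D a)) := by
    refine ind _ ?_ hleib ?_ ?_
    · intro r; simp [D_alg, d_alg, lmapTensorId, idTensorLmap, hone]
    · intro a b ha hb; simp only [map_add, ha, hb]; abel
    · intro a b ha hb
      rw [hc, map_add, idTensorLmap_algHom_mul, idTensorLmap_algHom_mul, map_mul,
        lmapTensorId_mul hc, idTensorLmap_mul hc, map_add, sigma12_mul, sigma12_mul, ha, hb,
        hcoassoc, hcoassoc, hs12, hs12]
      ring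
  -- Both terms of the co-Leibniz rule are cyclic translates of `(id ⊗ d)(D a)`.
  have leib_tau : ∀ a, idTensorLmap D.toLinearMap (d a)
      = tau3 R S (idTensorLmap d (D a)) - tau3 R S (tau3 R S (idTensorLmap d (D a))) := by
    intro a
    have hneg : (TensorProduct.comm R S S).toLinearMap ∘ₗ d = -d := by
      ext b
      exact skew b
    have h23 : sigma23 R S (idTensorLmap d (D a)) = - idTensorLmap d (D a) := by
      rw [sigma23_idTensorLmap, hneg]
      simp [idTensorLmap, LinearMap.lTensor_neg]
    rw [tau3_tau3, h23, tau3_idTensorLmap, hcocomm, leib, map_neg, sub_neg_eq_add]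
  refine ⟨?_, skew, leib⟩
  refine ind _ ?_ hjac ?_ ?_
  · intro r; simp [d_alg]
  · intro a b ha hb
    simp only [map_add]
    linear_combination ha + hb
  · intro a b ha hb
    rw [hc, map_add, idTensorLmap_mul hc, idTensorLmap_mul hc, leib_tau, leib_tau]
    simp only [map_add, map_sub, tau3_mul, htau, tau3_cube]
    linear_combination (idTensorLmap D.toLinearMap (D b)) * ha
      + (idTensorLmap D.toLinearMap (D a)) * hb

end Generic

lemma adjoin_range_symι (R V : Type) [CommRing R] [AddCommGroup V] [Module R V] :
    Algebra.adjoin R (Set.range (symι R V)) = ⊤ := by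
  have h : Set.range (symι R V)
      = Ideal.Quotient.mkₐ R (symIdeal R V) '' Set.range (MvPolynomial.X (R := R)) := by
    rw [← Set.range_comp]
    rfl
  rw [h, ← AlgHom.map_adjoin, MvPolynomial.adjoin_range_X, Algebra.map_top,
    AlgHom.range_eq_top]
  exact Ideal.Quotient.mkₐ_surjective R _

/-- **Lemma 4.1(3).** Let `S = Sym_R(V)` with its standard bialgebra structure, and let
`δ : S → S ⊗ S` be the extension of a linear map `δ' : V → S ⊗ S` determined by the
`(m,δ)`-compatibility and `δ(1) = 0`.  If `δ'` is co-skew symmetric and satisfies the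
co-Leibniz rule and the co-Jacobi identity `(τ² + τ + id)∘(id⊗δ)∘δ' = 0` on `V`, then
`δ` satisfies the co-Jacobi identity on all of `S`; consequently `(S, δ)` is a
co-Poisson coalgebra. -/
theorem statement7 {R : Type} [CommRing R] [Algebra ℚ R]
    {V : Type} [AddCommGroup V] [Module R V]
    (delta' : V →ₗ[R] SymmAlg R V ⊗[R] SymmAlg R V)
    (Delta : SymmAlg R V →ₐ[R] SymmAlg R V ⊗[R] SymmAlg R V)
    (hDelta : ∀ x : V, Delta (symι R V x) = symι R V x ⊗ₜ[R] 1 + 1 ⊗ₜ[R] symι R V x)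
    (delta : SymmAlg R V →ₗ[R] SymmAlg R V ⊗[R] SymmAlg R V)
    (hext : ∀ x : V, delta (symι R V x) = delta' x)
    (hone : delta 1 = 0)
    (hcompat : ∀ a b : SymmAlg R V, delta (a * b) = delta a * Delta b + Delta a * delta b)
    (hcoskew' : ∀ x : V,
      TensorProduct.comm R (SymmAlg R V) (SymmAlg R V) (delta' x) = - delta' x)
    (hcoleib' : ∀ x : V,
      idTensorLmap Delta.toLinearMap (delta (symι R V x))
        = lmapTensorId delta (Delta (symι R V x))
          + sigma12 R (SymmAlg R V) (idTensorLmap delta (Delta (symι R V x))))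
    (hcojacobi' : ∀ x : V,
      tau3 R (SymmAlg R V) (tau3 R (SymmAlg R V) (idTensorLmap delta (delta' x)))
        + tau3 R (SymmAlg R V) (idTensorLmap delta (delta' x))
        + idTensorLmap delta (delta' x) = 0) :
    (∀ a : SymmAlg R V,
      tau3 R (SymmAlg R V) (tau3 R (SymmAlg R V) (idTensorLmap delta (delta a)))
        + tau3 R (SymmAlg R V) (idTensorLmap delta (delta a))
        + idTensorLmap delta (delta a) = 0) ∧
    -- consequently `(S, δ)` is a co-Poisson coalgebra:
    (∀ a : SymmAlg R V,
      TensorProduct.comm R (SymmAlg R V) (SymmAlg R V) (delta a) = - delta a) ∧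
    (∀ a : SymmAlg R V,
      idTensorLmap Delta.toLinearMap (delta a)
        = lmapTensorId delta (Delta a)
          + sigma12 R (SymmAlg R V) (idTensorLmap delta (Delta a))) := by
  refine coPoisson_of_generators (symι R V) (adjoin_range_symι R V) hDelta hone hcompat ?_
    hcoleib' ?_
  · intro x; rw [hext]; exact hcoskew' x
  · intro x; rw [hext]; exact hcojacobi' x

end
end
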